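/- arXiv:1605.04677 — 2 statements merged into one kernel-verified Lean document; each statement's English description precedes it below -/
import Mathlib

section
/- Let k be a field, A' = k[[x]] the ring of formal power series over k, A₁ = k[x]_{(x)} the localization of the polynomial ring k[x] at the prime ideal (x), regarded as a subring of k[[x]]. Let B be a k-algebra of finite type, v : B → A' a k-algebra morphism, B₁ = A₁ ⊗_k B, and let v₁ : B₁ → A' be the induced A₁-algebra morphism given by a₁ ⊗ b ↦ a₁ · v(b). If v₁ factors through a smooth A₁-algebra, then v factors through a smooth k-algebra, i.e., v is a composite of k-algebra morphisms B → C → A' with C smooth over k. -/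
universe u

open TensorProduct

instance spanX_isPrime (k : Type u) [Field k] :
    (Ideal.span {Polynomial.X} : Ideal (Polynomial k)).IsPrime :=
  (Ideal.span_singleton_prime Polynomial.X_ne_zero).mpr Polynomial.prime_X

/-- `A₁ = k[x]_{(x)}`, the localization of the polynomial ring `k[x]` at the prime
ideal `(x)`. -/
abbrev LocAtX (k : Type u) [Field k] :=
  Localization.AtPrime (Ideal.span {Polynomial.X} : Ideal (Polynomial k))

/-- Every polynomial outside the prime ideal `(X)` becomes a unit in `k⟦X⟧`. -/
theorem primeCompl_isUnit_coe (k : Type u) [Field k]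
    (y : (Ideal.span {Polynomial.X} : Ideal (Polynomial k)).primeCompl) :
    IsUnit (Polynomial.coeToPowerSeries.ringHom (y : Polynomial k)) := by
  rw [PowerSeries.isUnit_iff_constantCoeff]
  have h0 : (y : Polynomial k).coeff 0 ≠ 0 := fun h =>
    y.2 (Ideal.mem_span_singleton.mpr (Polynomial.X_dvd_iff.mpr h))
  simpa using (isUnit_iff_ne_zero.mpr h0)

/-- The canonical inclusion of `k[x]_{(x)}` into the formal power series ring `k⟦x⟧`,
sending `f / g` (with `g (0) ≠ 0`) to `f * g⁻¹`. -/
noncomputable def canonicalInclusion (k : Type u) [Field k] :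
    LocAtX k →+* PowerSeries k :=
  IsLocalization.lift (S := LocAtX k)
    (g := Polynomial.coeToPowerSeries.ringHom) (primeCompl_isUnit_coe k)

/-- `k⟦x⟧` regarded as an algebra over `k[x]_{(x)}` via the canonical inclusion. -/
noncomputable instance powerSeriesAlgebraLocAtX (k : Type u) [Field k] :
    Algebra (LocAtX k) (PowerSeries k) :=
  (canonicalInclusion k).toAlgebra

/-- The canonical inclusion `k[x]_{(x)} → k⟦x⟧` as a morphism of `k`-algebras. -/
noncomputable def canonicalInclusionAlgHom (k : Type u) [Field k] :
    LocAtX k →ₐ[k] PowerSeries k :=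
  { canonicalInclusion k with
    commutes' := fun r => by
      have h : (algebraMap k (LocAtX k)) r =
          algebraMap (Polynomial k) (LocAtX k) (Polynomial.C r) := by
        rw [← Polynomial.algebraMap_eq, ← IsScalarTower.algebraMap_apply]
      show canonicalInclusion k (algebraMap k (LocAtX k) r) = _
      rw [h, canonicalInclusion, IsLocalization.lift_eq]
      simp [PowerSeries.C_eq_algebraMap] }

/-!
A formally smooth, essentially finite-type algebra `E` over a Noetherian ring `k` is a localization
`N⁻¹D` with `D` of finite type, and `D` may be taken to receive any given finite-type algebra
mapping to `E`. The smooth locus of `D` is open and contains the image of `Spec E`, hence contains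
a basic open `D(s)` with `s ∈ N`, so that `D → E` factors through the smooth algebra `D[1/s]`.
Since `k[x]_{(x)}` is formally smooth and essentially of finite type over `k`, so is every smooth
algebra over it.
-/

universe w

theorem exists_basicOpen_subset_of_range_comap_subset {D E : Type*} [CommRing D] [CommRing E]
    [Algebra D E] (N : Submonoid D) [IsLocalization N E] {U : Set (PrimeSpectrum D)}
    (hU : IsOpen U) (hrange : Set.range (PrimeSpectrum.comap (algebraMap D E)) ⊆ U) :
    ∃ s ∈ N, (PrimeSpectrum.basicOpen s : Set (PrimeSpectrum D)) ⊆ U := by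
  obtain ⟨I, hI⟩ := (PrimeSpectrum.isClosed_iff_zeroLocus_ideal _).mp hU.isClosed_compl
  have hmeet : ¬ Disjoint (I : Set D) N := fun hdisj => by
    obtain ⟨p, hp, hIp, hpN⟩ := Ideal.exists_le_prime_disjoint I N hdisj
    have hpU : (⟨p, hp⟩ : PrimeSpectrum D) ∈ Uᶜ := hI ▸ hIp
    refine hpU (hrange ?_)
    rw [PrimeSpectrum.localization_comap_range E N]
    exact hpN.symm
  obtain ⟨s, hsI, hsN⟩ := Set.not_disjoint_iff.mp hmeet
  refine ⟨s, hsN, fun p hp => ?_⟩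
  by_contra hpU
  exact hp ((hI ▸ hpU : p ∈ PrimeSpectrum.zeroLocus I) hsI)

instance formallySmooth_localization {k R : Type*} [CommRing k] [CommRing R] [Algebra k R]
    [Algebra.FormallySmooth k R] (M : Submonoid R) :
    Algebra.FormallySmooth k (Localization M) :=
  have : Algebra.FormallySmooth R (Localization M) := .of_isLocalization M
  .comp k R (Localization M)

theorem range_comap_subset_smoothLocus_of_isLocalization (k : Type*) {D : Type*} (E : Type*)
    [CommRing k] [CommRing D] [CommRing E] [Algebra k D] [Algebra k E] [Algebra D E]
    [IsScalarTower k D E] (N : Submonoid D) [IsLocalization N E] [Algebra.FormallySmooth k E] :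
    Set.range (PrimeSpectrum.comap (algebraMap D E)) ⊆ Algebra.smoothLocus k D := by
  rintro _ ⟨q, rfl⟩
  let Eloc := Localization.AtPrime q.asIdeal
  let p := q.asIdeal.comap (algebraMap D E)
  have : IsLocalization.AtPrime Eloc p :=
    IsLocalization.isLocalization_isLocalization_atPrime_isLocalization N Eloc q.asIdeal
  exact .of_equiv
    ((IsLocalization.algEquiv p.primeCompl Eloc (Localization.AtPrime p)).restrictScalars k)

theorem exists_mem_smooth_localizationAway (k : Type*) {D : Type*} (E : Type*) [CommRing k]
    [CommRing D] [CommRing E] [Algebra k D] [Algebra k E] [Algebra D E] [IsScalarTower k D E]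
    (N : Submonoid D) [IsLocalization N E] [Algebra.FinitePresentation k D]
    [Algebra.FormallySmooth k E] : ∃ s ∈ N, Algebra.Smooth k (Localization.Away s) := by
  obtain ⟨s, hs, hsub⟩ := exists_basicOpen_subset_of_range_comap_subset N
    Algebra.isOpen_smoothLocus (range_comap_subset_smoothLocus_of_isLocalization k E N)
  exact ⟨s, hs, Algebra.basicOpen_subset_smoothLocus_iff_smooth.mp hsub⟩

/-- A morphism of `R`-algebras is a composite through some smooth `R`-algebra. The universe of the
intermediate algebra is a parameter, listed first. -/
def FactorsThroughSmooth (R : Type*) {B L : Type*} [CommRing R] [CommRing B] [CommRing L]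
    [Algebra R B] [Algebra R L] (v : B →ₐ[R] L) : Prop :=
  ∃ (C : Type w) (_ : CommRing C) (_ : Algebra R C), Algebra.Smooth R C ∧
    ∃ (f : B →ₐ[R] C) (g : C →ₐ[R] L), v = g.comp f

theorem FactorsThroughSmooth.comp_left {R B E L : Type*} [CommRing R] [CommRing B] [CommRing E]
    [CommRing L] [Algebra R B] [Algebra R E] [Algebra R L] {φ : B →ₐ[R] E}
    (h : FactorsThroughSmooth.{w} R φ) (ψ : E →ₐ[R] L) :
    FactorsThroughSmooth.{w} R (ψ.comp φ) := by
  obtain ⟨C, _, _, hC, f, g, rfl⟩ := h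
  exact ⟨C, _, _, hC, f, ψ.comp g, rfl⟩

theorem factorsThroughSmooth_of_formallySmooth {k B : Type*} {E : Type w} [CommRing k]
    [IsNoetherianRing k] [CommRing B] [CommRing E] [Algebra k B] [Algebra k E]
    [Algebra.FiniteType k B] [Algebra.FormallySmooth k E] [Algebra.EssFiniteType k E]
    (φ : B →ₐ[k] E) : FactorsThroughSmooth.{w} k φ := by
  -- Choosing the model `D` of `E` over `B` rather than over `k` gives a map `B → D`.
  let : Algebra B E := φ.toAlgebra
  have : IsScalarTower k B E := .of_algebraMap_eq' φ.comp_algebraMap.symm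
  have : Algebra.EssFiniteType B E := .of_comp k B E
  let D := Algebra.EssFiniteType.subalgebra B E
  let N : Submonoid D := Algebra.EssFiniteType.submonoid B E
  have : Algebra.FiniteType k D := .trans (S := B) inferInstance inferInstance
  have : Algebra.FinitePresentation k D := Algebra.FinitePresentation.of_finiteType.mp this
  obtain ⟨s, hs, hsmooth⟩ := exists_mem_smooth_localizationAway k E N
  have hunit (y : Submonoid.powers s) : IsUnit (IsScalarTower.toAlgHom k D E y) :=
    IsLocalization.map_units E (⟨y, Submonoid.powers_le.mpr hs y.2⟩ : N)
  exact ⟨Localization.Away s, _, _, hsmooth,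
    (IsScalarTower.toAlgHom k D _).comp (IsScalarTower.toAlgHom k B D),
    IsLocalization.liftAlgHom hunit,
    AlgHom.ext fun b => (IsLocalization.lift_eq hunit (algebraMap B D b)).symm⟩

theorem factors_through_smooth_of_factors_over_localization_general {k A B L : Type*} [CommRing k]
    [IsNoetherianRing k] [CommRing A] [CommRing B] [CommRing L] [Algebra k A] [Algebra k B]
    [Algebra k L] [Algebra A L] [IsScalarTower k A L] [Algebra.FormallySmooth k A]
    [Algebra.EssFiniteType k A] [Algebra.FiniteType k B] (v : B →ₐ[k] L)
    (h : FactorsThroughSmooth.{w} A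
      (Algebra.TensorProduct.productLeftAlgHom (Algebra.ofId A L) v)) :
    FactorsThroughSmooth.{w} k v := by
  obtain ⟨E, _, _, _, f, g, hfg⟩ := h
  let : Algebra k E := Algebra.compHom E (algebraMap k A)
  have : IsScalarTower k A E := .of_algebraMap_eq fun _ => rfl
  have : Algebra.FormallySmooth k E := .comp k A E
  have : Algebra.EssFiniteType k E := .comp k A E
  let φ : B →ₐ[k] E := (f.restrictScalars k).comp Algebra.TensorProduct.includeRight
  have hv : v = (g.restrictScalars k).comp φ := by
    ext b
    simpa [φ] using DFunLike.congr_fun hfg (1 ⊗ₜ b)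
  exact hv ▸ (factorsThroughSmooth_of_formallySmooth φ).comp_left _

instance isScalarTower_locAtX_powerSeries (k : Type u) [Field k] :
    IsScalarTower k (LocAtX k) (PowerSeries k) :=
  .of_algebraMap_eq' (canonicalInclusionAlgHom k).comp_algebraMap.symm

/-- If the induced morphism `v₁ : A₁ ⊗_k B → k⟦x⟧`, `a₁ ⊗ b ↦ a₁ ⬝ v b`, factors through
a smooth `A₁ = k[x]_{(x)}`-algebra, then `v : B → k⟦x⟧` factors through a smooth
`k`-algebra. -/
theorem factors_through_smooth_of_factors_over_localization
    (k : Type u) [Field k] (B : Type u) [CommRing B] [Algebra k B]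
    (hB : Algebra.FiniteType k B) (v : B →ₐ[k] PowerSeries k)
    (hfac : ∃ (Ct : Type u) (_ : CommRing Ct) (_ : Algebra (LocAtX k) Ct),
      Algebra.Smooth (LocAtX k) Ct ∧
      ∃ (f : (LocAtX k ⊗[k] B) →ₐ[LocAtX k] Ct) (g : Ct →ₐ[LocAtX k] PowerSeries k),
        ∀ y : LocAtX k ⊗[k] B,
          g (f y) = Algebra.TensorProduct.productMap (canonicalInclusionAlgHom k) v y) :
    ∃ (C : Type u) (_ : CommRing C) (_ : Algebra k C), Algebra.Smooth k C ∧
      ∃ (f : B →ₐ[k] C) (g : C →ₐ[k] PowerSeries k), v = g.comp f := by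
  obtain ⟨E, _, _, hE, f, g, hfg⟩ := hfac
  exact factors_through_smooth_of_factors_over_localization_general (A := LocAtX k) v
    ⟨E, _, _, hE, f, g, AlgHom.ext fun y => (hfg y).symm⟩
end

section
/- Let k be a field and B a k-algebra of finite type. Then every k-algebra morphism v : B → k[[x]] into the ring of formal power series over k factors through a smooth k-algebra C, i.e., v is a composite of k-algebra morphisms B → C → k[[x]] with C smooth over k. -/
universe u

/-!
Let `y₁, …, yₙ ∈ k⟦X⟧` be the images of generators of `B`. By MacLane's criterion `k(y₁, …, yₙ)` is
separable over `k`, so some of the `yᵢ` form a transcendence basis over which the field is generated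
by one separable element `θ`, which may be taken in `k⟦X⟧`. Up to denominators, `θ` is thus a
simple root of a polynomial `F` over the polynomial ring on the basis, and `D yᵢ = Gᵢ(θ)`.

Replacing the tails of the basis and of `θ` by variables over `k[X]` gives a smooth domain `A`
mapping to `k⟦X⟧`, where divisibility by small powers of `X` can be tested. The lift `a` of `θ` to
`A` is only an approximate root of `F`, but a Newton step `a + X ^ M r`, where `r` is a simple root
of a polynomial over `A`, turns it into a root `Θ` over an étale `A`-algebra `C`. For `M` large this
preserves the divisibility `D ∣ Gᵢ(θ)`, so the `yᵢ` lift to `C`. As `C` is flat over `A`, nonzero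
polynomials in the basis stay nonzerodivisors in `C`, and all relations between the `yᵢ` are
relations between their lifts.
-/

section MacLane

open PowerSeries IntermediateField
open scoped nonZeroDivisors

lemma linearIndependent_comp_ringHom {ι α K L : Type*} [Finite ι] [Field K] [Field L]
    (σ : K →+* L) {f : ι → α → K} (hf : LinearIndependent K f) :
    LinearIndependent L fun i a ↦ σ (f i a) := by
  rw [← span_flip_eq_top_iff_linearIndependent] at hf ⊢
  set W := Submodule.span L (Set.range (flip fun i a ↦ σ (f i a)))
  have map_mem (v : ι → K) : σ ∘ v ∈ W := by
    induction (hf ▸ Submodule.mem_top : v ∈ Submodule.span K (Set.range (flip f)))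
      using Submodule.span_induction with
    | mem _ hv =>
      obtain ⟨a, rfl⟩ := hv
      exact Submodule.subset_span ⟨a, rfl⟩
    | zero => convert! W.zero_mem; ext; simp
    | add v w _ _ hv hw => convert! W.add_mem hv hw; ext; simp
    | smul c v _ hv => convert! W.smul_mem (σ c) hv; ext; simp
  classical
  have := Fintype.ofFinite ι
  rw [eq_top_iff, ← (Pi.basisFun L ι).span_eq, Submodule.span_le]
  rintro _ ⟨i, rfl⟩
  convert! map_mem (Pi.single i 1)
  ext j
  simp [Pi.single_apply, apply_ite σ]

lemma coeff_mul_pow_expChar {R : Type*} [CommRing R] (p : ℕ) [ExpChar R p] (f : R⟦X⟧) (m : ℕ) :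
    coeff (p * m) (f ^ p) = coeff m f ^ p := by
  have hp := expChar_ne_zero R p
  have : (expand p hp f).map (frobenius R p) = f ^ p := MvPowerSeries.map_frobenius_expand p hp
  rw [← this, coeff_map, coeff_expand_mul, frobenius_def]

lemma linearIndependent_powerSeries_pow_expChar {k ι : Type*} [Finite ι] [Field k] (p : ℕ)
    [ExpChar k p] {f : ι → k⟦X⟧} (hf : LinearIndependent k f) :
    LinearIndependent k fun i ↦ f i ^ p := by
  let coeffs : k⟦X⟧ →ₗ[k] ℕ → k := LinearMap.pi coeff
  have hcoeffs : LinearMap.ker coeffs = ⊥ :=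
    LinearMap.ker_eq_bot'.mpr fun g hg ↦ PowerSeries.ext fun m ↦ congrFun hg m
  refine .of_comp (LinearMap.pi fun m ↦ coeff (p * m)) ?_
  convert! linearIndependent_comp_ringHom (frobenius k p) (hf.map' coeffs hcoeffs)
  exact coeff_mul_pow_expChar p _ _

lemma linearIndependent_pow_expChar_of_isFractionRing {k Ω ι : Type*} [Finite ι] [Field k]
    [Field Ω] [Algebra k⟦X⟧ Ω] [IsFractionRing k⟦X⟧ Ω] [Algebra k Ω] [IsScalarTower k k⟦X⟧ Ω]
    (p : ℕ) [ExpChar k p] {f : ι → Ω} (hf : LinearIndependent k f) :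
    LinearIndependent k fun i ↦ f i ^ p := by
  obtain ⟨d, hd⟩ := IsLocalization.exist_integer_multiples_of_finite k⟦X⟧⁰ f
  choose g hg using hd
  replace hg (i : ι) : algebraMap k⟦X⟧ Ω (g i) = algebraMap k⟦X⟧ Ω d * f i :=
    (hg i).trans (Algebra.smul_def _ _)
  let incl := (IsScalarTower.toAlgHom k k⟦X⟧ Ω).toLinearMap
  have hincl : LinearMap.ker incl = ⊥ :=
    LinearMap.ker_eq_bot.mpr (IsFractionRing.injective k⟦X⟧ Ω)
  have hd0 : algebraMap k⟦X⟧ Ω d ≠ 0 := IsFractionRing.to_map_ne_zero_of_mem_nonZeroDivisors d.2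
  have hmul {c : Ω} (hc : c ≠ 0) : LinearMap.ker (LinearMap.mulLeft k c) = ⊥ :=
    LinearMap.ker_eq_bot.mpr (mul_right_injective₀ hc)
  have hg' : LinearIndependent k g := by
    refine .of_comp incl ?_
    convert! hf.map' _ (hmul hd0)
    exact funext hg
  refine .of_comp (LinearMap.mulLeft k (algebraMap k⟦X⟧ Ω d ^ p)) ?_
  convert! (linearIndependent_powerSeries_pow_expChar p hg').map' incl hincl
  ext i
  simp [incl, ← mul_pow, ← hg]

lemma exists_isTranscendenceBasis_of_adjoin_range_eq_top {k K ι : Type*} [Field k] [Field K]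
    [Algebra k K] {a : ι → K} (ha : adjoin k (Set.range a) = ⊤) :
    ∃ s : Set ι, IsTranscendenceBasis k fun i : s ↦ a i := by
  have : Algebra.IsAlgebraic (Algebra.adjoin k (Set.range a)) K := by
    rw [← isAlgebraic_adjoin_iff_top, ha, Algebra.isAlgebraic_iff_isIntegral]
    exact Algebra.isIntegral_of_surjective topEquiv.surjective
  obtain ⟨t, hts, ht⟩ := exists_isTranscendenceBasis_subset (R := k) (Set.range a)
  obtain ⟨s, rfl, hinj⟩ := Set.exists_image_eq_injOn_of_subset_range hts
  exact ⟨s, (isTranscendenceBasis_image hinj).mpr ht⟩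

lemma exists_isTranscendenceBasis_isSeparable_of_adjoin_range_eq_top {k K ι : Type*} [Finite ι]
    [Field k] [Field K] [Algebra k K] (p : ℕ) [hp : ExpChar k p]
    (H : ∀ s : Finset K, LinearIndepOn k _root_.id (s : Set K) →
      LinearIndepOn k (· ^ p) (s : Set K))
    {a : ι → K} (ha : adjoin k (Set.range a) = ⊤) :
    ∃ s : Set ι, IsTranscendenceBasis k (fun i : s ↦ a i) ∧
      Algebra.IsSeparable (adjoin k (a '' s)) K := by
  obtain ⟨s, hs, hmax⟩ := (Set.toFinite {s : Set ι | IsTranscendenceBasis k fun i : s ↦ a i})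
    |>.exists_maximalFor
    (fun s ↦ (separableClosure (adjoin k (a '' s)) K).restrictScalars k) _
    (exists_isTranscendenceBasis_of_adjoin_range_eq_top ha)
  refine ⟨s, hs, ?_⟩
  have : Algebra.IsAlgebraic (adjoin k (a '' s)) K := by
    convert! hs.isAlgebraic_field <;> simp [Set.image_eq_range]
  cases hp with
  | zero => infer_instance
  | prime hp =>
    have mem_closure {t : Set ι} {j : ι} (hj : j ∈ t) :
        a j ∈ (separableClosure (adjoin k (a '' t)) K).restrictScalars k :=
      le_restrictScalars_separableClosure _ (subset_adjoin _ _ ⟨j, hj, rfl⟩)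
    rw [← separableClosure.eq_top_iff, ← (restrictScalars_injective k).eq_iff,
      restrictScalars_top, eq_top_iff, ← ha, adjoin_le_iff]
    rintro _ ⟨n, rfl⟩
    -- If `a n` is not separable, exchanging a member of `s` for `n` enlarges the separable closure.
    by_contra hn
    have hns : n ∉ s := fun h ↦ hn (mem_closure h)
    have : ExpChar k p := .prime hp
    obtain ⟨i, hi, hsep⟩ :=
      exists_isTranscendenceBasis_and_isSeparable_of_linearIndepOn_pow' p hp H s n hs hns
    have mem_closure' {j : ι} (hj : j ∈ insert n s) : a j ∈
        (separableClosure (adjoin k (a '' (insert n s \ {i}))) K).restrictScalars k := by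
      obtain rfl | hji := eq_or_ne j i
      exacts [hsep, mem_closure ⟨hj, hji⟩]
    refine hn (hmax hi ?_ (mem_closure' (.inl rfl)))
    refine (separableClosure_le_separableClosure_iff _ _ _).mpr (adjoin_le_iff.mpr ?_)
    rintro _ ⟨j, hj, rfl⟩
    exact mem_closure' (.inr hj)

end MacLane

section

open scoped nonZeroDivisors PowerSeries Polynomial

lemma algHom_eval₂ {k P A B : Type*} [CommSemiring k] [CommSemiring P] [CommSemiring A]
    [CommSemiring B] [Algebra k P] [Algebra k A] [Algebra k B] (φ : A →ₐ[k] B) (σ : P →ₐ[k] A)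
    (a : A) (H : P[X]) :
    φ (H.eval₂ (σ : P →+* A) a) = H.eval₂ (φ.comp σ : P →+* B) (φ a) :=
  Polynomial.hom_eval₂ H (σ : P →+* A) (φ : A →+* B) a

/-- `F` is, up to denominators, the minimal polynomial of `θ` over the subring `τ P` of `S`, and
`θ` is separable over it. The last field turns every polynomial relation satisfied by `θ` into one
satisfied by any root of `F` at which the nonzero elements of `P` are nonzerodivisors. -/
structure IsSeparableMinpoly {P S : Type*} [CommRing P] [CommRing S] (τ : P →+* S) (θ : S)
    (F : P[X]) : Prop where
  eval₂_eq_zero : F.eval₂ τ θ = 0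
  eval₂_derivative_ne_zero : F.derivative.eval₂ τ θ ≠ 0
  exists_dvd_C_mul : ∀ H : P[X], H.eval₂ τ θ = 0 → ∃ δ ≠ 0, F ∣ .C δ * H

section FractionField

open Polynomial IntermediateField

variable {P L Ω : Type*} [CommRing P] [IsDomain P] [Field L] [Algebra P L] [IsFractionRing P L]
  [Field Ω] [Algebra L Ω] [Algebra P Ω] [IsScalarTower P L Ω] {θ : Ω}

lemma exists_isSeparableMinpoly (hθ : IsSeparable L θ) :
    ∃ F : P[X], IsSeparableMinpoly (algebraMap P Ω) θ F := by
  have eval₂_of_map {H : P[X]} {b : P} {h : L[X]} (hH : H.map (algebraMap P L) = b • h) :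
      H.eval₂ (algebraMap P Ω) θ = algebraMap P Ω b * aeval θ h := by
    rw [← aeval_def, ← aeval_map_algebraMap L, hH, ← algebraMap_smul L b, map_smul,
      Algebra.smul_def, ← IsScalarTower.algebraMap_apply]
  obtain ⟨b, hb, hF⟩ := IsLocalization.integerNormalization_spec P⁰ (minpoly L θ)
  set F := IsLocalization.integerNormalization P⁰ (minpoly L θ)
  refine ⟨F, ?_, ?_, fun H hH ↦ ?_⟩
  · rw [eval₂_of_map hF, minpoly.aeval, mul_zero]
  · rw [eval₂_of_map (b := b) (h := derivative (minpoly L θ))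
      (by rw [← derivative_map, hF, derivative_smul]), IsScalarTower.algebraMap_apply P L Ω]
    refine mul_ne_zero ?_ (hθ.aeval_derivative_ne_zero (minpoly.aeval _ _))
    exact (_root_.map_ne_zero _).mpr (IsFractionRing.to_map_ne_zero_of_mem_nonZeroDivisors hb)
  · obtain ⟨q, hq⟩ := minpoly.dvd L θ (p := H.map (algebraMap P L)) (by
      rw [aeval_map_algebraMap, aeval_def, hH])
    obtain ⟨c, hc, hQ⟩ := IsLocalization.integerNormalization_spec P⁰ q
    refine ⟨b * c, nonZeroDivisors.ne_zero (mul_mem hb hc),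
      IsLocalization.integerNormalization P⁰ q, map_injective _ (IsFractionRing.injective P L) ?_⟩
    rw [Polynomial.map_mul, Polynomial.map_mul, hF, hQ, hq, map_C, smul_mul_smul_comm,
      ← algebraMap_smul L (b * c), smul_eq_C_mul]

lemma exists_mul_eq_eval₂_of_mem_adjoin_simple {ι : Type*} [Finite ι] (hθ : IsAlgebraic L θ)
    {z : ι → Ω} (hz : ∀ i, z i ∈ L⟮θ⟯) :
    ∃ D : P, D ≠ 0 ∧ ∃ G : ι → P[X], ∀ i,
      algebraMap P Ω D * z i = (G i).eval₂ (algebraMap P Ω) θ := by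
  have hz' (i : ι) : ∃ h : L[X], aeval θ h = z i := by
    have := hz i
    rwa [← mem_toSubalgebra, adjoin_simple_toSubalgebra_of_isAlgebraic hθ,
      Algebra.adjoin_singleton_eq_range_aeval] at this
  choose h hh using hz'
  let := (mapRingHom (algebraMap P L)).toAlgebra
  have := Polynomial.isLocalization P⁰ L
  obtain ⟨⟨_, D, hD, rfl⟩, hDh⟩ :=
    IsLocalization.exist_integer_multiples_of_finite (P⁰.map (C : P →+* P[X])) h
  choose G hG using hDh
  have hG (i : ι) : (G i).map (algebraMap P L) = (C D).map (algebraMap P L) * h i :=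
    (hG i).trans (Algebra.smul_def _ _)
  refine ⟨D, nonZeroDivisors.ne_zero hD, G, fun i ↦ ?_⟩
  rw [← aeval_def, ← aeval_map_algebraMap L, hG, map_mul, aeval_map_algebraMap, aeval_C, hh]

end FractionField

lemma IsSeparableMinpoly.of_eval₂_eq_zero_iff {P S T : Type*} [CommRing P] [CommRing S]
    [CommRing T] {τ : P →+* S} {θ : S} {τ' : P →+* T} {θ' : T} {F : P[X]}
    (hF : IsSeparableMinpoly τ θ F)
    (h : ∀ H : P[X], H.eval₂ τ θ = 0 ↔ H.eval₂ τ' θ' = 0) :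
    IsSeparableMinpoly τ' θ' F where
  eval₂_eq_zero := (h F).mp hF.eval₂_eq_zero
  eval₂_derivative_ne_zero := (h _).not.mp hF.eval₂_derivative_ne_zero
  exists_dvd_C_mul H hH := hF.exists_dvd_C_mul H ((h H).mpr hH)

section

open IntermediateField

lemma exists_isSeparableMinpoly_mvPolynomial {k K κ ι : Type*} [Finite ι] [Field k] [Field K]
    [Algebra k K] {t : κ → K} (ht : AlgebraicIndependent k t) {θ : K}
    (hθ : IsSeparable (adjoin k (Set.range t)) θ) (z : ι → K)
    (hz : ∀ i, z i ∈ (adjoin k (Set.range t))⟮θ⟯) :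
    let τ : MvPolynomial κ k →ₐ[k] K := MvPolynomial.aeval t
    ∃ F, IsSeparableMinpoly (τ : MvPolynomial κ k →+* K) θ F ∧
      ∃ D : MvPolynomial κ k, D ≠ 0 ∧ ∃ G : ι → (MvPolynomial κ k)[X], ∀ i,
        τ D * z i = (G i).eval₂ (τ : MvPolynomial κ k →+* K) θ := by
  let t' (i : κ) : adjoin k (Set.range t) := ⟨t i, subset_adjoin k _ ⟨i, rfl⟩⟩
  have coe_aeval_t' (q : MvPolynomial κ k) :
      (MvPolynomial.aeval t' q : K) = MvPolynomial.aeval t q :=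
    (MvPolynomial.map_aeval t' (algebraMap _ K) q).trans rfl
  let := (MvPolynomial.aeval (R := k) t').toAlgebra
  let := (MvPolynomial.aeval (R := k) t).toAlgebra
  have : IsScalarTower (MvPolynomial κ k) (adjoin k (Set.range t)) K :=
    .of_algebraMap_eq fun q ↦ (coe_aeval_t' q).symm
  have : FaithfulSMul (MvPolynomial κ k) (adjoin k (Set.range t)) := by
    refine (faithfulSMul_iff_algebraMap_injective _ _).mpr fun q r h ↦ ht ?_
    exact (coe_aeval_t' q).symm.trans ((congrArg Subtype.val h).trans (coe_aeval_t' r))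
  have : IsFractionRing (MvPolynomial κ k) (adjoin k (Set.range t)) := by
    refine .of_field _ _ fun z ↦ ?_
    obtain ⟨q, r, hqr⟩ := (mem_adjoin_range_iff k t z).mp z.2
    exact ⟨q, r, Subtype.ext (by rw [hqr, ← coe_aeval_t', ← coe_aeval_t']; rfl)⟩
  obtain ⟨F, hF⟩ := exists_isSeparableMinpoly (P := MvPolynomial κ k) hθ
  exact ⟨F, hF, exists_mul_eq_eval₂_of_mem_adjoin_simple hθ.isIntegral.isAlgebraic hz⟩

lemma exists_algebraicIndependent_primitive_element {k K Ω ι : Type*} [Field k] [Finite ι] [Field K]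
    [Algebra k K] [Field Ω] [Algebra k⟦X⟧ Ω] [IsFractionRing k⟦X⟧ Ω] [Algebra k Ω]
    [IsScalarTower k k⟦X⟧ Ω] (j : K →ₐ[k] Ω) {a : ι → K} (ha : adjoin k (Set.range a) = ⊤) :
    ∃ s : Set ι, AlgebraicIndependent k (fun i : s ↦ a i) ∧
      ∃ θ : K, j θ ∈ (algebraMap k⟦X⟧ Ω).range ∧ IsSeparable (adjoin k (a '' s)) θ ∧
        (adjoin k (a '' s))⟮θ⟯ = ⊤ := by
  obtain ⟨p, _⟩ := ExpChar.exists k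
  obtain ⟨s, hs, hsep⟩ := exists_isTranscendenceBasis_isSeparable_of_adjoin_range_eq_top p
    (fun t ht ↦ .of_comp j.toLinearMap <| by
      simpa [LinearIndepOn, Function.comp_def] using
        linearIndependent_pow_expChar_of_isFractionRing p
          (ht.map' j.toLinearMap (LinearMap.ker_eq_bot.mpr j.injective))) ha
  have : Algebra.EssFiniteType k K :=
    fg_top_iff.mp (ha ▸ fg_adjoin_of_finite (Set.finite_range a))
  have : Algebra.EssFiniteType (adjoin k (a '' s)) K := .of_comp k _ _
  have : FiniteDimensional (adjoin k (a '' s)) K :=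
    Algebra.finite_of_essFiniteType_of_isAlgebraic
  obtain ⟨α, hα⟩ := Field.exists_primitive_element (adjoin k (a '' s)) K
  refine ⟨s, hs.1, ?_⟩
  obtain ⟨θ, hθ⟩ | ⟨θ, hθ⟩ := ValuationRing.isInteger_or_isInteger k⟦X⟧ (j α)
  · exact ⟨α, ⟨θ, hθ⟩, Algebra.IsSeparable.isSeparable _ _, hα⟩
  · refine ⟨α⁻¹, ⟨θ, by rw [hθ, map_inv₀]⟩, Algebra.IsSeparable.isSeparable _ _, ?_⟩
    rw [eq_top_iff, ← hα, adjoin_simple_le_iff]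
    simpa using inv_mem (mem_adjoin_simple_self (adjoin k (a '' s)) α⁻¹)

lemma exists_isSeparableMinpoly_powerSeries {k ι : Type*} [Field k] [Finite ι] (y : ι → k⟦X⟧) :
    ∃ s : Set ι, let τ : MvPolynomial s k →ₐ[k] k⟦X⟧ := MvPolynomial.aeval fun i ↦ y i
      Function.Injective τ ∧ ∃ θ F, IsSeparableMinpoly (τ : MvPolynomial s k →+* k⟦X⟧) θ F ∧
        ∃ D : MvPolynomial s k, D ≠ 0 ∧ ∃ G : ι → (MvPolynomial s k)[X], ∀ i,
          τ D * y i = (G i).eval₂ (τ : MvPolynomial s k →+* k⟦X⟧) θ := by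
  let Ω := FractionRing k⟦X⟧
  let incl : k⟦X⟧ →ₐ[k] Ω := IsScalarTower.toAlgHom k k⟦X⟧ Ω
  have hincl : Function.Injective incl := IsFractionRing.injective k⟦X⟧ Ω
  let K := adjoin k (Set.range (incl ∘ y))
  let a (i : ι) : K := ⟨incl (y i), subset_adjoin k _ ⟨i, rfl⟩⟩
  have ha : adjoin k (Set.range a) = ⊤ := lift_injective K <| by
    rw [lift_adjoin, lift_top, ← Set.range_comp]; rfl
  obtain ⟨s, hs, θ', ⟨θ, hθ⟩, hsep, htop⟩ :=
    exists_algebraicIndependent_primitive_element (Ω := Ω) K.val ha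
  rw [Set.image_eq_range] at hsep htop
  obtain ⟨F, hF, D, hD, G, hG⟩ :=
    exists_isSeparableMinpoly_mvPolynomial hs hsep a fun _ ↦ htop ▸ mem_top
  let τ' : MvPolynomial s k →ₐ[k] K := MvPolynomial.aeval fun i ↦ a i
  let τ : MvPolynomial s k →ₐ[k] k⟦X⟧ := MvPolynomial.aeval fun i ↦ y i
  have val_comp_τ' : K.val.comp τ' = incl.comp τ := by ext; simp [τ, τ', a]
  have val_eval₂ (H : (MvPolynomial s k)[X]) :
      K.val (H.eval₂ (τ' : MvPolynomial s k →+* K) θ') =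
        incl (H.eval₂ (τ : MvPolynomial s k →+* k⟦X⟧) θ) := by
    rw [algHom_eval₂, algHom_eval₂, val_comp_τ']
    exact congr(H.eval₂ _ $(hθ.symm))
  refine ⟨s, ?_, θ, F, hF.of_eval₂_eq_zero_iff fun H ↦ ?_, D, hD, G, fun i ↦ hincl ?_⟩
  · have : AlgebraicIndependent k (incl ∘ fun i : s ↦ y i) := hs.map' (f := K.val) K.val.injective
    exact AlgebraicIndependent.of_comp incl this
  · rw [← map_eq_zero_iff K.val K.val.injective, val_eval₂, map_eq_zero_iff incl hincl]
  · rw [← val_eval₂, ← hG, map_mul, map_mul]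
    exact congr($(val_comp_τ'.symm) D * incl (y i))

end

lemma exists_dvd_sub_algebraMap_of_mem_adjoin {k R A : Type*} [CommRing k] [CommRing R] [CommRing A]
    [Algebra k R] [Algebra R A] [Algebra k A] [IsScalarTower k R A] {d : A} {s : Set A}
    (hs : ∀ z ∈ s, ∃ p : R, d ∣ z - algebraMap R A p) {z : A} (hz : z ∈ Algebra.adjoin k s) :
    ∃ p : R, d ∣ z - algebraMap R A p := by
  induction hz using Algebra.adjoin_induction with
  | mem z hz => exact hs z hz
  | algebraMap c => exact ⟨algebraMap k R c, by simp [← IsScalarTower.algebraMap_apply]⟩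
  | add z w _ _ hz hw =>
    obtain ⟨⟨p, hp⟩, ⟨q, hq⟩⟩ := hz, hw
    exact ⟨p + q, by rw [map_add, add_sub_add_comm]; exact dvd_add hp hq⟩
  | mul z w _ _ hz hw =>
    obtain ⟨⟨p, hp⟩, ⟨q, hq⟩⟩ := hz, hw
    exact ⟨p * q, by rw [map_mul]; exact dvd_mul_sub_mul hp hq⟩

lemma X_pow_dvd_of_X_pow_dvd_map {k A : Type*} [CommRing k] [CommRing A] [Algebra k[X] A]
    (ψ : A →ₐ[k[X]] k⟦X⟧) {m N : ℕ} (hmN : m ≤ N) {z : A} {p : k[X]}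
    (hzp : algebraMap k[X] A .X ^ N ∣ z - algebraMap k[X] A p) (hz : PowerSeries.X ^ m ∣ ψ z) :
    algebraMap k[X] A .X ^ m ∣ z := by
  replace hzp := (pow_dvd_pow _ hmN).trans hzp
  have hp : PowerSeries.X ^ m ∣ (p : k⟦X⟧) := by
    refine (dvd_sub_right hz).mp ?_
    simpa [PowerSeries.algebraMap_apply'] using map_dvd ψ hzp
  have hp : Polynomial.X ^ m ∣ p := by
    simpa [PowerSeries.X_pow_dvd_iff, Polynomial.X_pow_dvd_iff] using hp
  exact (dvd_sub_left (by simpa using map_dvd (algebraMap k[X] A) hp)).mp hzp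

lemma exists_smooth_lift_powerSeries {k : Type u} [Field k] {ι : Type} [Finite ι]
    (y : ι → k⟦X⟧) (N : ℕ) :
    ∃ (A : Type u) (_ : CommRing A) (_ : IsDomain A) (_ : Algebra k A) (_ : Algebra.Smooth k A)
      (ψ : A →ₐ[k] k⟦X⟧) (x : A) (y' : ι → A), ψ x = PowerSeries.X ∧ (∀ i, ψ (y' i) = y i) ∧
      ∀ z ∈ Algebra.adjoin k (Set.range y'), ∀ m ≤ N, PowerSeries.X ^ m ∣ ψ z → x ^ m ∣ z := by
  have : Algebra.Smooth k k[X] := {}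
  have : Algebra.Smooth k[X] (MvPolynomial ι k[X]) := {}
  let ψ : MvPolynomial ι k[X] →ₐ[k[X]] k⟦X⟧ :=
    MvPolynomial.aeval fun i ↦ PowerSeries.mk fun n ↦ PowerSeries.coeff (n + N) (y i)
  let x : MvPolynomial ι k[X] := algebraMap k[X] _ .X
  have ψ_x : ψ x = PowerSeries.X := by simp [x, PowerSeries.algebraMap_apply']
  let y' (i : ι) : MvPolynomial ι k[X] :=
    algebraMap k[X] _ (PowerSeries.trunc N (y i)) + x ^ N * .X i
  refine ⟨MvPolynomial ι k[X], inferInstance, inferInstance, inferInstance,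
    .comp k k[X] _, ψ.restrictScalars k, x, y', ψ_x, fun i ↦ ?_, fun z hz m hm hdvd ↦ ?_⟩
  · conv_rhs => rw [PowerSeries.eq_X_pow_mul_shift_add_trunc N (y i), add_comm]
    simp only [AlgHom.coe_restrictScalars', y', map_add, map_mul, map_pow, ψ_x, ψ.commutes]
    simp [ψ, PowerSeries.algebraMap_apply']
  · obtain ⟨p, hp⟩ := exists_dvd_sub_algebraMap_of_mem_adjoin (d := x ^ N) (by
      rintro _ ⟨i, rfl⟩
      exact ⟨PowerSeries.trunc N (y i), .X i, add_sub_cancel_left _ _⟩) hz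
    exact X_pow_dvd_of_X_pow_dvd_map ψ hm hp hdvd

open Polynomial in
/-- The universal `A`-algebra in which `g` has a root at which its derivative is invertible. -/
abbrev SimpleRootAlgebra {A : Type*} [CommRing A] (g : A[X]) : Type _ :=
  Localization.Away (AdjoinRoot.mk g (derivative g))

namespace SimpleRootAlgebra

open Polynomial

variable {A S : Type*} [CommRing A] [CommRing S] [Algebra A S] (g : A[X])

/-- The universal simple root of `g`. -/
noncomputable def root : SimpleRootAlgebra g :=
  algebraMap (AdjoinRoot g) _ (AdjoinRoot.root g)

lemma aeval_root_eq (p : A[X]) :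
    aeval (root g) p = algebraMap (AdjoinRoot g) _ (AdjoinRoot.mk g p) := by
  rw [root, aeval_algebraMap_apply, AdjoinRoot.aeval_eq]

lemma aeval_root : aeval (root g) g = 0 := by
  rw [aeval_root_eq, AdjoinRoot.mk_self, map_zero]

lemma isUnit_aeval_root_derivative : IsUnit (aeval (root g) (derivative g)) := by
  rw [aeval_root_eq]
  exact IsLocalization.Away.algebraMap_isUnit _

variable {g} in
lemma exists_algHom {s : S} (hs : aeval s g = 0) (hs' : IsUnit (aeval s (derivative g))) :
    ∃ φ : SimpleRootAlgebra g →ₐ[A] S, φ (root g) = s := by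
  let φ₀ : AdjoinRoot g →ₐ[A] S := AdjoinRoot.liftAlgHom g (Algebra.ofId A S) s hs
  have hφ₀ : IsUnit (φ₀ (AdjoinRoot.mk g (derivative g))) := by
    simpa [φ₀] using! hs'
  refine ⟨IsLocalization.Away.liftAlgHom (AdjoinRoot.mk g (derivative g)) hφ₀, ?_⟩
  exact (IsLocalization.Away.lift_eq _ hφ₀ _).trans (AdjoinRoot.lift_root hs)

variable {g} in
lemma algHom_ext {φ χ : SimpleRootAlgebra g →ₐ[A] S} (h : φ (root g) = χ (root g)) : φ = χ :=
  IsLocalization.algHom_ext (.powers (AdjoinRoot.mk g (derivative g))) (AdjoinRoot.algHom_ext h)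

lemma existsUnique_sub_mem_and_aeval_eq_zero {g : A[X]} {I : Ideal S} (hI : I ^ 2 = ⊥) {s : S}
    (hs : aeval s g ∈ I) (hs' : IsUnit (aeval s (derivative g))) :
    ∃! r, r - s ∈ I ∧ aeval r g = 0 := by
  have aeval_eq {r : S} (hr : r - s ∈ I) :
      aeval r g = aeval s g + aeval s (derivative g) * (r - s) := by
    rw [← aeval_add_of_sq_eq_zero g s (r - s) (hI.le (Ideal.pow_mem_pow hr 2)), add_sub_cancel]
  obtain ⟨q, hq⟩ := hs'.exists_right_inv
  have mem : s - q * aeval s g - s ∈ I := by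
    rw [sub_sub_cancel_left]
    exact I.neg_mem (I.mul_mem_left q hs)
  refine ⟨s - q * aeval s g, ⟨mem, ?_⟩, fun r ⟨hr, hr0⟩ ↦ ?_⟩
  · rw [aeval_eq mem]
    linear_combination -aeval s g * hq
  · rw [aeval_eq hr] at hr0
    linear_combination q * hr0 - (r - s) * hq

instance : Algebra.FormallyEtale A (SimpleRootAlgebra g) := by
  refine Algebra.FormallyEtale.iff_comp_bijective.mpr fun B _ _ I hI ↦
    (Function.bijective_iff_existsUnique _).mpr fun φ ↦ ?_
  have mk_aeval {r : B} (hr : Ideal.Quotient.mkₐ A I r = φ (root g)) (p : A[X]) :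
      Ideal.Quotient.mkₐ A I (aeval r p) = φ (aeval (root g) p) := by
    rw [← aeval_algHom_apply, hr, aeval_algHom_apply]
  have isUnit_derivative {r : B} (hr : Ideal.Quotient.mkₐ A I r = φ (root g)) :
      IsUnit (aeval r (derivative g)) := by
    refine (IsNilpotent.isUnit_quotient_mk_iff (I := I) ⟨2, hI⟩).mp ?_
    exact (mk_aeval hr _).symm ▸ (isUnit_aeval_root_derivative g).map φ
  obtain ⟨s, hs⟩ := Ideal.Quotient.mkₐ_surjective A I (φ (root g))
  have aeval_mem : aeval s g ∈ I := Ideal.Quotient.eq_zero_iff_mem.mp <|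
    (mk_aeval hs g).trans (by rw [aeval_root, map_zero])
  obtain ⟨r, ⟨hrs, hr⟩, hr'⟩ :=
    existsUnique_sub_mem_and_aeval_eq_zero hI aeval_mem (isUnit_derivative hs)
  have mk_r : Ideal.Quotient.mkₐ A I r = φ (root g) := (Ideal.Quotient.eq.mpr hrs).trans hs
  obtain ⟨χ, hχ⟩ := exists_algHom hr (isUnit_derivative mk_r)
  refine ⟨χ, algHom_ext (by simpa [hχ] using mk_r), fun χ' hχ' ↦ algHom_ext ?_⟩
  refine (hr' _ ⟨?_, by rw [aeval_algHom_apply, aeval_root, map_zero]⟩).trans hχ.symm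
  exact Ideal.Quotient.eq.mp (congr($hχ' (root g)).trans hs.symm)

instance : Algebra.Etale A (SimpleRootAlgebra g) where
  finitePresentation :=
    have := IsLocalization.Away.finitePresentation (S := SimpleRootAlgebra g)
      (AdjoinRoot.mk g (derivative g))
    .trans A (AdjoinRoot g) _

end SimpleRootAlgebra

section

open Polynomial

lemma exists_comp_eq_C_mul {A : Type*} [CommRing A] (F : A[X]) {a x b u : A} {c M : ℕ}
    (hcM : c ≤ M) (hb : F.eval a = x ^ (M + c) * b) (hu : F.derivative.eval a = x ^ c * u) :
    ∃ g : A[X], F.comp (C a + C (x ^ M) * X) = C (x ^ (M + c)) * g ∧ g.eval 0 = b ∧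
      g.derivative.eval 0 = u := by
  obtain ⟨q, hq⟩ := binomExpansion (F.map C) (C a) (C (x ^ M) * X)
  obtain ⟨d, rfl⟩ := Nat.exists_eq_add_of_le hcM
  refine ⟨C b + C u * X + C (x ^ d) * q * X ^ 2, ?_, by simp, by simp⟩
  rw [derivative_map, eval_map, eval_map, eval_map, eval₂_at_apply, eval₂_at_apply, hb, hu] at hq
  rw [comp, hq]
  simp only [map_mul, map_pow, pow_add]
  ring

lemma exists_etale_root {A S : Type u} [CommRing A] [CommRing S] [Algebra A S] (F : A[X])
    {a x b u : A} {c M : ℕ} (hcM : c ≤ M) (hb : F.eval a = x ^ (M + c) * b)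
    (hu : F.derivative.eval a = x ^ c * u) (hb0 : algebraMap A S b = 0)
    (hu' : IsUnit (algebraMap A S u)) :
    ∃ (C : Type u) (_ : CommRing C) (_ : Algebra A C) (_ : Algebra.Etale A C) (φ : C →ₐ[A] S)
      (r : C), φ r = 0 ∧ aeval (algebraMap A C a + algebraMap A C x ^ M * r) F = 0 := by
  obtain ⟨g, hFg, rfl, rfl⟩ := exists_comp_eq_C_mul F hcM hb hu
  have aeval_zero_eq (p : A[X]) : aeval (0 : S) p = algebraMap A S (p.eval 0) := by
    rw [← aeval_algebraMap_apply_eq_algebraMap_eval, map_zero]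
  obtain ⟨φ, hφ⟩ := SimpleRootAlgebra.exists_algHom
    ((aeval_zero_eq g).trans hb0) ((aeval_zero_eq g.derivative).symm ▸ hu')
  refine ⟨SimpleRootAlgebra g, inferInstance, inferInstance, inferInstance, φ, .root g, hφ, ?_⟩
  have := congr(aeval (SimpleRootAlgebra.root g) $hFg)
  simpa [aeval_comp, SimpleRootAlgebra.aeval_root] using this

end

lemma exists_smooth_lift_powerSeries_eval₂ {k : Type u} [Field k] {κ : Type} [Finite κ]
    (τ : MvPolynomial κ k →ₐ[k] k⟦X⟧) (θ : k⟦X⟧) (N : ℕ) :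
    ∃ (A : Type u) (_ : CommRing A) (_ : IsDomain A) (_ : Algebra k A) (_ : Algebra.Smooth k A)
      (ψ : A →ₐ[k] k⟦X⟧) (x : A) (σ : MvPolynomial κ k →ₐ[k] A) (a : A), ψ x = PowerSeries.X ∧
      ψ.comp σ = τ ∧ ψ a = θ ∧ ∀ H : (MvPolynomial κ k)[X], ∀ m ≤ N,
        PowerSeries.X ^ m ∣ H.eval₂ (τ : MvPolynomial κ k →+* k⟦X⟧) θ →
          x ^ m ∣ H.eval₂ (σ : MvPolynomial κ k →+* A) a := by
  obtain ⟨A, _, _, _, _, ψ, x, y, ψ_x, ψ_y, hx⟩ :=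
    exists_smooth_lift_powerSeries (fun i : Option κ ↦ i.elim θ fun j ↦ τ (.X j)) N
  let σ : MvPolynomial κ k →ₐ[k] A := MvPolynomial.aeval fun j ↦ y (some j)
  have ψ_σ : ψ.comp σ = τ := by ext; simp [σ, ψ_y]
  have mem_adjoin (i : Option κ) : y i ∈ Algebra.adjoin k (Set.range y) :=
    Algebra.subset_adjoin ⟨i, rfl⟩
  have σ_mem (q : MvPolynomial κ k) : σ q ∈ Algebra.adjoin k (Set.range y) := by
    refine Algebra.adjoin_mono (Set.range_comp_subset_range some y) ?_
    exact (MvPolynomial.aeval_range (R := k) (y ∘ some)).le ⟨q, rfl⟩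
  refine ⟨A, inferInstance, inferInstance, inferInstance, inferInstance, ψ, x, σ, y none, ψ_x, ψ_σ,
    ψ_y none, fun H m hm hdvd ↦ hx _ ?_ m hm ?_⟩
  · rw [Polynomial.eval₂_eq_sum]
    exact sum_mem fun n _ ↦ mul_mem (σ_mem _) (pow_mem (mem_adjoin none) n)
  · convert! hdvd
    refine (Polynomial.hom_eval₂ H (σ : MvPolynomial κ k →+* A) (ψ : A →+* k⟦X⟧) (y none)).trans ?_
    exact congr(H.eval₂ ($ψ_σ : MvPolynomial κ k →+* k⟦X⟧) $(ψ_y none))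

lemma exists_eq_X_pow_mul_isUnit {k : Type*} [Field k] {f : k⟦X⟧} (hf : f ≠ 0) :
    ∃ n w, IsUnit w ∧ f = PowerSeries.X ^ n * w := by
  obtain ⟨n, w, hw⟩ :=
    IsDiscreteValuationRing.eq_unit_mul_pow_irreducible hf PowerSeries.X_irreducible
  exact ⟨n, w, w.isUnit, by rw [hw, mul_comm]⟩

lemma exists_eq_pow_mul_of_pow_dvd {A R F : Type*} [CommRing A] [CommRing R] [FunLike F A R]
    [MonoidHomClass F A R] {ψ : F} {x : A} {n : ℕ} (hx : ψ x ∈ R⁰) {z : A} {w : R}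
    (hz : ψ z = ψ x ^ n * w) (h : x ^ n ∣ z) : ∃ u, z = x ^ n * u ∧ ψ u = w := by
  obtain ⟨u, rfl⟩ := h
  refine ⟨u, rfl, ?_⟩
  rw [map_mul, map_pow] at hz
  exact (mul_cancel_left_mem_nonZeroDivisors (pow_mem hx n)).mp hz

lemma exists_smooth_isUnit_of_isUnit_map {k A : Type u} {S : Type*} [CommRing k] [CommRing A]
    [IsDomain A] [Algebra k A] [Algebra.Smooth k A] [CommRing S] [Nontrivial S] [Algebra k S]
    (ψ : A →ₐ[k] S) {z : A} (hz : IsUnit (ψ z)) :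
    ∃ (A' : Type u) (_ : CommRing A') (_ : IsDomain A') (_ : Algebra k A') (_ : Algebra.Smooth k A')
      (ι : A →ₐ[k] A') (ψ' : A' →ₐ[k] S), ψ'.comp ι = ψ ∧ IsUnit (ι z) := by
  have hz0 : z ≠ 0 := by
    rintro rfl
    simp at hz
  have := Algebra.Etale.of_isLocalizationAway (A := Localization.Away z) z
  refine ⟨Localization.Away z, inferInstance,
    IsLocalization.isDomain_localization (powers_le_nonZeroDivisors_of_noZeroDivisors hz0),
    inferInstance, .comp k A _, IsScalarTower.toAlgHom k A _, IsLocalization.Away.liftAlgHom z hz,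
    AlgHom.ext fun a ↦ IsLocalization.Away.lift_eq z hz a, IsLocalization.Away.algebraMap_isUnit z⟩

lemma exists_smooth_approximate_root {k : Type u} [Field k] {κ : Type} [Finite κ]
    (τ : MvPolynomial κ k →ₐ[k] k⟦X⟧) {θ : k⟦X⟧} {F : (MvPolynomial κ k)[X]}
    (hF : F.eval₂ (τ : MvPolynomial κ k →+* k⟦X⟧) θ = 0)
    (hF' : F.derivative.eval₂ (τ : MvPolynomial κ k →+* k⟦X⟧) θ ≠ 0)
    {D : MvPolynomial κ k} (hD : τ D ≠ 0) :
    ∃ (A : Type u) (_ : CommRing A) (_ : IsDomain A) (_ : Algebra k A) (_ : Algebra.Smooth k A)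
      (ψ : A →ₐ[k] k⟦X⟧) (σ : MvPolynomial κ k →ₐ[k] A) (x a b u : A) (c M : ℕ),
      ψ.comp σ = τ ∧ ψ a = θ ∧ c ≤ M ∧ F.eval₂ (σ : MvPolynomial κ k →+* A) a = x ^ (M + c) * b ∧
      ψ b = 0 ∧ F.derivative.eval₂ (σ : MvPolynomial κ k →+* A) a = x ^ c * u ∧ IsUnit (ψ u) ∧
      σ D ∣ x ^ M ∧ ∀ H : (MvPolynomial κ k)[X],
        τ D ∣ H.eval₂ (τ : MvPolynomial κ k →+* k⟦X⟧) θ →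
          σ D ∣ H.eval₂ (σ : MvPolynomial κ k →+* A) a := by
  obtain ⟨c, w, hw, hF'w⟩ := exists_eq_X_pow_mul_isUnit hF'
  obtain ⟨e, v, hv, hDv⟩ := exists_eq_X_pow_mul_isUnit hD
  obtain ⟨A₀, _, _, _, _, ψ₀, x, σ₀, a, ψ₀_x, ψ₀_σ₀, ψ₀_a, x_dvd⟩ :=
    exists_smooth_lift_powerSeries_eval₂ τ θ (e + c + c)
  have lift_factor (H : (MvPolynomial κ k)[X]) {n : ℕ} {f : k⟦X⟧} (hn : n ≤ e + c + c)
      (hH : H.eval₂ (τ : MvPolynomial κ k →+* k⟦X⟧) θ = PowerSeries.X ^ n * f) :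
      ∃ z, H.eval₂ (σ₀ : MvPolynomial κ k →+* A₀) a = x ^ n * z ∧ ψ₀ z = f :=
    exists_eq_pow_mul_of_pow_dvd
      (by rw [ψ₀_x]; exact mem_nonZeroDivisors_of_ne_zero PowerSeries.X_ne_zero)
      (by rw [algHom_eval₂, ψ₀_σ₀, ψ₀_a, ψ₀_x, hH]) (x_dvd H n hn ⟨f, hH⟩)
  obtain ⟨b, hb, hb0⟩ := lift_factor F le_rfl (hF.trans (mul_zero _).symm)
  obtain ⟨u, hu, rfl⟩ := lift_factor F.derivative (by omega) hF'w
  obtain ⟨D₀, hD₀, rfl⟩ := lift_factor (.C D) (n := e) (by omega) (by simpa using! hDv)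
  rw [Polynomial.eval₂_C] at hD₀
  obtain ⟨A, _, _, _, _, ι, ψ, rfl, hιD₀⟩ := exists_smooth_isUnit_of_isUnit_map ψ₀ hv
  have σD_dvd_iff (z : A) : ι.comp σ₀ D ∣ z ↔ ι x ^ e ∣ z := by
    rw [AlgHom.comp_apply, ← AlgHom.coe_toRingHom σ₀, hD₀, map_mul, map_pow, hιD₀.mul_right_dvd]
  refine ⟨A, inferInstance, inferInstance, inferInstance, inferInstance, ψ, ι.comp σ₀, ι x, ι a,
    ι b, ι u, c, e + c, ψ₀_σ₀, ψ₀_a, by omega, ?_, hb0, ?_, hw, ?_, fun H hH ↦ ?_⟩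
  · rw [← algHom_eval₂, hb, map_mul, map_pow]
  · rw [← algHom_eval₂, hu, map_mul, map_pow]
  · exact (σD_dvd_iff _).mpr (pow_dvd_pow _ (by omega))
  · rw [← algHom_eval₂, σD_dvd_iff, ← map_pow]
    exact map_dvd ι (x_dvd H e (by omega) (.trans ⟨_, hDv⟩ hH))

lemma algebraMap_mem_nonZeroDivisors_of_flat {A C : Type*} [CommRing A] [CommRing C] [Algebra A C]
    [Module.Flat A C] {z : A} (hz : z ∈ A⁰) : algebraMap A C z ∈ C⁰ := by
  refine mem_nonZeroDivisors_iff_right.mpr fun w hw ↦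
    (Module.Flat.isSMulRegular_of_nonZeroDivisors (M := C) hz).right_eq_zero_of_smul ?_
  rwa [Algebra.smul_def, mul_comm]

lemma exists_smooth_lift_root {k : Type u} [Field k] {κ : Type} [Finite κ]
    {τ : MvPolynomial κ k →ₐ[k] k⟦X⟧} (hτ : Function.Injective τ) {θ : k⟦X⟧}
    {F : (MvPolynomial κ k)[X]} (hF : F.eval₂ (τ : MvPolynomial κ k →+* k⟦X⟧) θ = 0)
    (hF' : F.derivative.eval₂ (τ : MvPolynomial κ k →+* k⟦X⟧) θ ≠ 0)
    {D : MvPolynomial κ k} (hD : D ≠ 0) :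
    ∃ (C : Type u) (_ : CommRing C) (_ : Algebra k C) (_ : Algebra.Smooth k C)
      (φ : C →ₐ[k] k⟦X⟧) (σ : MvPolynomial κ k →ₐ[k] C) (Θ : C),
      φ.comp σ = τ ∧ φ Θ = θ ∧ F.eval₂ (σ : MvPolynomial κ k →+* C) Θ = 0 ∧
      (∀ δ ≠ 0, σ δ ∈ C⁰) ∧ ∀ H : (MvPolynomial κ k)[X],
        τ D ∣ H.eval₂ (τ : MvPolynomial κ k →+* k⟦X⟧) θ →
          σ D ∣ H.eval₂ (σ : MvPolynomial κ k →+* C) Θ := by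
  obtain ⟨A, _, _, _, _, ψ, σ, x, a, b, u, c, M, rfl, rfl, hcM, hb, hb0, hu, hu', hDM, hDH⟩ :=
    exists_smooth_approximate_root τ hF hF' ((map_ne_zero_iff τ hτ).mpr hD)
  let := ψ.toAlgebra
  obtain ⟨C, _, _, _, φ, r, φ_r, hr⟩ := exists_etale_root (S := k⟦X⟧)
    (F.map (σ : MvPolynomial κ k →+* A)) hcM
    (by rw [Polynomial.eval_map, hb]) (by rw [Polynomial.derivative_map, Polynomial.eval_map, hu])
    hb0 hu'
  let := ((algebraMap A C).comp (algebraMap k A)).toAlgebra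
  have : IsScalarTower k A C := .of_algebraMap_eq fun _ ↦ rfl
  have : IsScalarTower k A k⟦X⟧ := .of_algebraMap_eq fun z ↦ (ψ.commutes z).symm
  let σ' : MvPolynomial κ k →ₐ[k] C := (IsScalarTower.toAlgHom k A C).comp σ
  let Θ : C := algebraMap A C a + algebraMap A C x ^ M * r
  refine ⟨C, inferInstance, inferInstance, .comp k A C, φ.restrictScalars k, σ', Θ, ?_, ?_, ?_, ?_,
    fun H hH ↦ ?_⟩
  · exact AlgHom.ext fun q ↦ φ.commutes (σ q)
  · exact (map_add φ _ _).trans (by rw [map_mul, φ_r, mul_zero, add_zero, φ.commutes]; rfl)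
  · rw [← hr, Polynomial.aeval_def, Polynomial.eval₂_map]
    rfl
  · intro δ hδ
    have hσδ : σ δ ≠ 0 := fun h ↦ hδ (hτ (by simp [h]))
    exact algebraMap_mem_nonZeroDivisors_of_flat (mem_nonZeroDivisors_of_ne_zero hσδ)
  · have Θ_sub_dvd : σ' D ∣ Θ - algebraMap A C a := by
      rw [add_sub_cancel_left, ← map_pow]
      exact (map_dvd (algebraMap A C) hDM).mul_right r
    have := Θ_sub_dvd.trans (Polynomial.sub_dvd_eval_sub Θ (algebraMap A C a)
      (H.map (σ' : MvPolynomial κ k →+* C)))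
    rw [Polynomial.eval_map, Polynomial.eval_map] at this
    refine (dvd_iff_dvd_of_dvd_sub this).mpr ?_
    have := map_dvd (IsScalarTower.toAlgHom k A C) (hDH H hH)
    rwa [algHom_eval₂] at this

lemma IsSeparableMinpoly.eval₂_eq_zero_of_mem_nonZeroDivisors {P S T : Type*} [CommRing P]
    [CommRing S] [CommRing T] {τ : P →+* S} {θ : S} {F : P[X]} (hF : IsSeparableMinpoly τ θ F)
    {σ : P →+* T} (hσ : ∀ δ ≠ 0, σ δ ∈ T⁰) {Θ : T} (hΘ : F.eval₂ σ Θ = 0) {H : P[X]}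
    (hH : H.eval₂ τ θ = 0) : H.eval₂ σ Θ = 0 := by
  obtain ⟨δ, hδ, hdvd⟩ := hF.exists_dvd_C_mul H hH
  have := Polynomial.eval₂_eq_zero_of_dvd_of_eval₂_eq_zero σ Θ hdvd hΘ
  rwa [Polynomial.eval₂_mul, Polynomial.eval₂_C,
    mul_left_mem_nonZeroDivisors_eq_zero_iff (hσ δ hδ)] at this

lemma exists_pow_mul_aeval_eq_map {k R ι : Type*} [CommRing k] [CommRing R] [Algebra k R]
    (D : R) (G : ι → R) (H : MvPolynomial ι k) :
    ∃ (m : ℕ) (e : R), ∀ (S : Type u) [CommRing S] [Algebra k S] (f : R →ₐ[k] S) (y : ι → S),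
      (∀ i, f D * y i = f (G i)) → f D ^ m * MvPolynomial.aeval y H = f e := by
  induction H using MvPolynomial.induction_on with
  | C a => exact ⟨0, algebraMap k R a, fun S _ _ f y _ ↦ by simp⟩
  | add H₁ H₂ ih₁ ih₂ =>
    obtain ⟨m₁, e₁, h₁⟩ := ih₁
    obtain ⟨m₂, e₂, h₂⟩ := ih₂
    refine ⟨m₁ + m₂, D ^ m₂ * e₁ + D ^ m₁ * e₂, fun S _ _ f y hy ↦ ?_⟩
    simp only [map_add, map_mul, map_pow, ← h₁ S f y hy, ← h₂ S f y hy]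
    ring
  | mul_X H i ih =>
    obtain ⟨m, e, h⟩ := ih
    refine ⟨m + 1, e * G i, fun S _ _ f y hy ↦ ?_⟩
    rw [map_mul, MvPolynomial.aeval_X, map_mul, ← h S f y hy, ← hy]
    ring

lemma aeval_eq_zero_of_fractions {k R ι : Type*} [CommRing k] [CommRing R] [Algebra k R]
    {S T : Type u} [CommRing S] [CommRing T] [Algebra k S] [Algebra k T] {f : R →ₐ[k] S}
    {g : R →ₐ[k] T} (hfg : ∀ r, f r = 0 → g r = 0) {D : R} (hD : g D ∈ T⁰) {G : ι → R}
    {y : ι → S} {c : ι → T} (hy : ∀ i, f D * y i = f (G i)) (hc : ∀ i, g D * c i = g (G i))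
    {H : MvPolynomial ι k} (hH : MvPolynomial.aeval y H = 0) : MvPolynomial.aeval c H = 0 := by
  obtain ⟨m, e, he⟩ := exists_pow_mul_aeval_eq_map D G H
  rw [← mul_left_mem_nonZeroDivisors_eq_zero_iff (pow_mem hD m), he T g c hc]
  exact hfg e (by rw [← he S f y hy, hH, mul_zero])

lemma exists_smooth_lift_forall_aeval_eq_zero {k : Type u} [Field k] {ι : Type} [Finite ι]
    (y : ι → k⟦X⟧) :
    ∃ (C : Type u) (_ : CommRing C) (_ : Algebra k C) (_ : Algebra.Smooth k C)
      (φ : C →ₐ[k] k⟦X⟧) (c : ι → C), (∀ i, φ (c i) = y i) ∧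
      ∀ H : MvPolynomial ι k, MvPolynomial.aeval y H = 0 → MvPolynomial.aeval c H = 0 := by
  obtain ⟨s, hτ, θ, F, hF, D, hD, G, hG⟩ := exists_isSeparableMinpoly_powerSeries y
  set τ : MvPolynomial s k →ₐ[k] k⟦X⟧ := MvPolynomial.aeval fun i ↦ y i
  obtain ⟨C, _, _, _, φ, σ, Θ, φ_σ, φ_Θ, hΘ, hσ, σD_dvd⟩ :=
    exists_smooth_lift_root hτ hF.eval₂_eq_zero hF.eval₂_derivative_ne_zero hD
  choose c hc using fun i ↦ σD_dvd (G i) ⟨y i, (hG i).symm⟩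
  refine ⟨C, inferInstance, inferInstance, inferInstance, φ, c, fun i ↦ ?_, fun H hH ↦ ?_⟩
  · refine mul_left_cancel₀ ((map_ne_zero_iff τ hτ).mpr hD) ?_
    rw [hG, ← φ_σ, ← φ_Θ, ← algHom_eval₂, hc, map_mul, AlgHom.comp_apply]
  · let evalτ := Polynomial.eval₂AlgHom τ θ fun _ ↦ .all _ _
    let evalσ := Polynomial.eval₂AlgHom σ Θ fun _ ↦ .all _ _
    refine aeval_eq_zero_of_fractions (f := evalτ) (g := evalσ) (D := .C D) (G := G)
      (fun _ h ↦ hF.eval₂_eq_zero_of_mem_nonZeroDivisors hσ hΘ h) ?_ (fun i ↦ ?_) (fun i ↦ ?_) hH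
    · simpa [evalσ] using hσ D hD
    · simpa [evalτ] using hG i
    · simpa [evalσ] using (hc i).symm

end

/-- Let `k` be a field and `B` a `k`-algebra of finite type.  Then every `k`-algebra
morphism `v : B → k⟦x⟧` into the ring of formal power series over `k` factors through a
smooth `k`-algebra `C`. -/
theorem factors_through_smooth_of_map_to_powerSeries
    (k : Type u) [Field k] (B : Type u) [CommRing B] [Algebra k B]
    (hB : Algebra.FiniteType k B) (v : B →ₐ[k] PowerSeries k) :
    ∃ (C : Type u) (_ : CommRing C) (_ : Algebra k C), Algebra.Smooth k C ∧
      ∃ (f : B →ₐ[k] C) (g : C →ₐ[k] PowerSeries k), v = g.comp f := by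
  obtain ⟨n, π, hπ⟩ := Algebra.FiniteType.iff_quotient_mvPolynomial''.mp hB
  have aeval_eq : MvPolynomial.aeval (fun i ↦ v (π (.X i))) = v.comp π := by ext; simp
  obtain ⟨C, _, _, _, φ, c, φ_c, hc⟩ :=
    exists_smooth_lift_forall_aeval_eq_zero fun i ↦ v (π (.X i))
  have ker_le : RingHom.ker π.toRingHom ≤
      RingHom.ker (MvPolynomial.aeval (R := k) c).toRingHom := fun H (hH : π H = 0) ↦
    hc H (by rw [aeval_eq, AlgHom.comp_apply, hH, map_zero])
  refine ⟨C, inferInstance, inferInstance, inferInstance, AlgHom.liftOfSurjective π hπ _ ker_le,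
    φ, (AlgHom.cancel_right hπ).mp ?_⟩
  rw [AlgHom.comp_assoc, AlgHom.liftOfSurjective_comp]
  exact MvPolynomial.algHom_ext fun i ↦ by simp [φ_c]
end
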